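/- Let δ : 𝕃 → ℚ be the group homomorphism with δ(x⃗_i) = 1/p_i and δ(c⃗) = 1. If δ(ω⃗) < 0 (the Fano case), then the restriction to the interval [0, d c⃗] of the quotient map 𝕃 → 𝕃/ℤω⃗ is surjective onto 𝕃/ℤω⃗. -/

import Mathlib

/-- The subgroup of relations `p i • x⃗_i − c⃗` inside the free abelian group
`(Fin n → ℤ) × ℤ` on the generators `x⃗_1, …, x⃗_n, c⃗`. -/
def GLrels (n : ℕ) (p : Fin n → ℕ) : AddSubgroup ((Fin n → ℤ) × ℤ) :=
  AddSubgroup.closure (Set.range fun i : Fin n => ((Pi.single i (p i : ℤ), -1) : (Fin n → ℤ) × ℤ))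

/-- The grading group `𝕃 = ⟨x⃗_1, …, x⃗_n, c⃗⟩ / ⟨p_i x⃗_i − c⃗⟩`. -/
abbrev GLgroup (n : ℕ) (p : Fin n → ℕ) : Type :=
  ((Fin n → ℤ) × ℤ) ⧸ GLrels n p

/-- The generator `x⃗_i` of `𝕃`. -/
def GLx (n : ℕ) (p : Fin n → ℕ) (i : Fin n) : GLgroup n p :=
  QuotientAddGroup.mk (Pi.single i 1, 0)

/-- The generator `c⃗` of `𝕃`. -/
def GLc (n : ℕ) (p : Fin n → ℕ) : GLgroup n p :=
  QuotientAddGroup.mk (0, 1)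

/-- The positive cone `𝕃_+`: the submonoid of `𝕃` generated by `x⃗_1, …, x⃗_n` and `c⃗`. -/
def GLplus (n : ℕ) (p : Fin n → ℕ) : AddSubmonoid (GLgroup n p) :=
  AddSubmonoid.closure ({GLc n p} ∪ Set.range (GLx n p))

/-- The partial order relation on `𝕃`: `x⃗ ≤ y⃗` iff `y⃗ − x⃗ ∈ 𝕃_+`. -/
def GLle (n : ℕ) (p : Fin n → ℕ) (x y : GLgroup n p) : Prop :=
  y - x ∈ GLplus n p

/-- The dualizing element `ω⃗ = (n − d − 1) c⃗ − Σ_i x⃗_i` of `𝕃`. -/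
def GLomega (d n : ℕ) (p : Fin n → ℕ) : GLgroup n p :=
  ((n : ℤ) - d - 1) • GLc n p - ∑ i, GLx n p i

/-!
The interval `[0, d c⃗]` consists of the `z` with both `z` and `d c⃗ - z` in `𝕃₊`. Normal forms
`∑ aᵢ x⃗ᵢ + m c⃗` with `0 ≤ aᵢ < pᵢ` give the dichotomy that every `x ∈ 𝕃` satisfies `x ∈ 𝕃₊` or
`d c⃗ + ω⃗ - x ∈ 𝕃₊`, according to the sign of `m`. As `δ` is nonnegative on `𝕃₊` and `δ(ω⃗) < 0`,
each coset `y + ℤω⃗` leaves `𝕃₊` in the direction of `ω⃗` and, by the dichotomy, enters it in the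
opposite direction. At the last `k` with `z = y + k ω⃗ ∈ 𝕃₊`, the dichotomy applied to `z + ω⃗ ∉ 𝕃₊`
says exactly that `d c⃗ - z ∈ 𝕃₊`.
-/

section CosetInterval

variable {G A : Type*} [AddCommGroup G] [AddCommGroup A] [LinearOrder A] [IsOrderedAddMonoid A]
  [Archimedean A] {P : Set G} {s w : G}

theorem exists_forall_le_of_add_zsmul_mem (δ : G →+ A) (hδ : ∀ x ∈ P, 0 ≤ δ x) (hw : δ w < 0)
    (y : G) : ∃ b : ℤ, ∀ k : ℤ, y + k • w ∈ P → k ≤ b := by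
  obtain ⟨N, hN⟩ := Archimedean.arch (δ y) (neg_pos.2 hw)
  refine ⟨N, fun k hk => (zsmul_le_zsmul_iff_left (neg_pos.2 hw)).1 ?_⟩
  have hnonneg : 0 ≤ δ y + k • δ w := by simpa only [map_add, map_zsmul] using hδ _ hk
  calc k • -δ w ≤ δ y := by rwa [zsmul_neg, neg_le_iff_add_nonneg]
    _ ≤ (N : ℤ) • -δ w := by rwa [natCast_zsmul]

theorem exists_add_zsmul_mem_and_sub_mem (δ : G →+ A) (hδ : ∀ x ∈ P, 0 ≤ δ x) (hw : δ w < 0)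
    (hP : ∀ x, x ∈ P ∨ s + w - x ∈ P) (y : G) :
    ∃ k : ℤ, y + k • w ∈ P ∧ s - (y + k • w) ∈ P := by
  have hbdd := exists_forall_le_of_add_zsmul_mem δ hδ hw y
  have hne : ∃ k : ℤ, y + k • w ∈ P := by
    obtain ⟨b, hb⟩ := exists_forall_le_of_add_zsmul_mem δ hδ hw (s + w - y)
    refine ⟨-(b + 1), (hP _).resolve_right fun hmem => ?_⟩
    have hle : b + 1 ≤ b := hb _ (by simpa only [neg_zsmul, sub_add_eq_sub_sub, sub_neg_eq_add]
      using hmem)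
    omega
  obtain ⟨k, hk, hmax⟩ := Int.exists_greatest_of_bdd hbdd hne
  have hnext : y + (k + 1) • w ∉ P := fun hmem => (lt_add_one k).not_ge (hmax _ hmem)
  have hdual : s + w - (y + (k + 1) • w) = s - (y + k • w) := by
    rw [add_zsmul, one_zsmul]
    abel
  exact ⟨k, hk, hdual ▸ (hP _).resolve_left hnext⟩

end CosetInterval

theorem exists_zsmul_eq_nsmul_add_zsmul_nsmul {G : Type*} [AddGroup G] {p : ℕ} (hp : 0 < p)
    (g : G) (k : ℤ) : ∃ a < p, ∃ q : ℤ, k • g = a • g + q • p • g := by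
  obtain ⟨a, ha⟩ := Int.eq_ofNat_of_zero_le (Int.emod_nonneg k (Int.natCast_ne_zero.2 hp.ne'))
  have hlt : a < p := by
    exact_mod_cast ha ▸ Int.emod_lt_of_pos k (Int.natCast_pos.2 hp)
  refine ⟨a, hlt, k / p, ?_⟩
  rw [← natCast_zsmul g p, ← natCast_zsmul g a, ← mul_zsmul', ← add_zsmul, ← ha,
    Int.emod_add_mul_ediv]

namespace GLgroup

variable {n : ℕ} {p : Fin n → ℕ}

theorem nsmul_GLx (i : Fin n) : p i • GLx n p i = GLc n p := by
  have hrel : ((Pi.single i (p i : ℤ), -1) : (Fin n → ℤ) × ℤ) ∈ GLrels n p :=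
    AddSubgroup.subset_closure ⟨i, rfl⟩
  unfold GLx GLc
  rw [← QuotientAddGroup.mk_nsmul, QuotientAddGroup.eq_iff_sub_mem]
  simpa [← Pi.single_smul] using hrel

theorem mk_eq_sum (v : Fin n → ℤ) (m : ℤ) :
    (QuotientAddGroup.mk (v, m) : GLgroup n p) = ∑ i, v i • GLx n p i + m • GLc n p := by
  have hbasis : ((v, m) : (Fin n → ℤ) × ℤ)
      = ∑ i, v i • ((Pi.single i 1, 0) : (Fin n → ℤ) × ℤ) + m • ((0, 1) : (Fin n → ℤ) × ℤ) := by
    ext j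
    · simp [Prod.fst_sum, Finset.sum_apply, Pi.single_apply]
    · simp [Prod.snd_sum]
  simpa only [map_add, map_sum, map_zsmul, QuotientAddGroup.mk'_apply, GLx, GLc]
    using congrArg (QuotientAddGroup.mk' (GLrels n p)) hbasis

theorem exists_normal_form (hp : ∀ i, 0 < p i) (x : GLgroup n p) :
    ∃ (a : Fin n → ℕ) (m : ℤ), (∀ i, a i < p i) ∧ x = ∑ i, a i • GLx n p i + m • GLc n p := by
  obtain ⟨⟨v, m⟩, rfl⟩ := QuotientAddGroup.mk_surjective x
  choose a ha q hq using fun i =>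
    exists_zsmul_eq_nsmul_add_zsmul_nsmul (hp i) (GLx n p i) (v i)
  refine ⟨a, ∑ i, q i + m, ha, ?_⟩
  have hsum : (∑ i, q i) • GLc n p = ∑ i, q i • GLc n p :=
    map_sum (zmultiplesHom _ (GLc n p)) q Finset.univ
  simp only [mk_eq_sum, hq, nsmul_GLx, Finset.sum_add_distrib, add_zsmul, hsum, add_assoc]

theorem sum_nsmul_add_zsmul_mem_GLplus (a : Fin n → ℕ) {m : ℤ} (hm : 0 ≤ m) :
    ∑ i, a i • GLx n p i + m • GLc n p ∈ GLplus n p := by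
  obtain ⟨k, rfl⟩ := Int.eq_ofNat_of_zero_le hm
  rw [natCast_zsmul]
  exact add_mem
    (sum_mem fun i _ => nsmul_mem (AddSubmonoid.subset_closure (.inr ⟨i, rfl⟩)) _)
    (nsmul_mem (AddSubmonoid.subset_closure (.inl rfl)) _)

theorem sum_nsmul_add_sum_nsmul_add_sum_GLx {a b : Fin n → ℕ} (hab : ∀ i, p i = a i + b i + 1) :
    ∑ i, a i • GLx n p i + ∑ i, b i • GLx n p i + ∑ i, GLx n p i = n • GLc n p := by
  have hterm (i : Fin n) : a i • GLx n p i + b i • GLx n p i + GLx n p i = GLc n p := by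
    rw [← add_nsmul, ← succ_nsmul, ← hab, nsmul_GLx]
  simp only [← Finset.sum_add_distrib, hterm, Finset.sum_const, Finset.card_univ, Fintype.card_fin]

theorem mem_GLplus_or_sub_mem_GLplus (d : ℕ) (hp : ∀ i, 0 < p i) (x : GLgroup n p) :
    x ∈ GLplus n p ∨ (d : ℤ) • GLc n p + GLomega d n p - x ∈ GLplus n p := by
  obtain ⟨a, m, ha, rfl⟩ := exists_normal_form hp x
  rcases le_or_gt 0 m with hm | hm
  · exact .inl (sum_nsmul_add_zsmul_mem_GLplus a hm)
  choose b hb using fun i => Nat.exists_eq_add_of_lt (ha i)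
  have hdual : (d : ℤ) • GLc n p + GLomega d n p - (∑ i, a i • GLx n p i + m • GLc n p)
      = ∑ i, b i • GLx n p i + (-1 - m) • GLc n p := by
    simp only [GLomega, sub_zsmul, neg_zsmul, one_zsmul, natCast_zsmul,
      ← sum_nsmul_add_sum_nsmul_add_sum_GLx hb]
    abel
  exact .inr (hdual ▸ sum_nsmul_add_zsmul_mem_GLplus b (by omega))

theorem map_nonneg_of_mem_GLplus {A : Type*} [AddCommMonoid A] [Preorder A] [AddLeftMono A]
    (δ : GLgroup n p →+ A) (hx : ∀ i, 0 ≤ δ (GLx n p i)) (hc : 0 ≤ δ (GLc n p)) :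
    ∀ z ∈ GLplus n p, 0 ≤ δ z := by
  suffices GLplus n p ≤ (AddSubmonoid.nonneg A).comap δ from this
  refine AddSubmonoid.closure_le.2 ?_
  rintro _ (rfl | ⟨i, rfl⟩)
  · exact hc
  · exact hx i

end GLgroup

/-- In the Fano case `δ(ω⃗) < 0`, i.e. when the group homomorphism
`δ : 𝕃 → ℚ` with `δ(x⃗_i) = 1/p_i` and `δ(c⃗) = 1` satisfies `δ(ω⃗) < 0`, the quotient
map `𝕃 → 𝕃/ℤω⃗` restricted to the interval `[0, d c⃗]` is surjective onto `𝕃/ℤω⃗`. -/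
theorem interval_surjects_onto_quotient_of_fano (d n : ℕ) (hd : 1 ≤ d) (p : Fin n → ℕ)
    (hp : ∀ i, 0 < p i)
    (δ : GLgroup n p →+ ℚ) (hδx : ∀ i, δ (GLx n p i) = 1 / (p i : ℚ))
    (hδc : δ (GLc n p) = 1) (hFano : δ (GLomega d n p) < 0) :
    Set.SurjOn (QuotientAddGroup.mk' (AddSubgroup.zmultiples (GLomega d n p)))
      {z : GLgroup n p | GLle n p 0 z ∧ GLle n p z ((d : ℤ) • GLc n p)}
      Set.univ := by
  rintro q -
  obtain ⟨y, rfl⟩ := QuotientAddGroup.mk_surjective q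
  have hnonneg : ∀ z ∈ GLplus n p, 0 ≤ δ z :=
    GLgroup.map_nonneg_of_mem_GLplus δ (fun i => by rw [hδx]; positivity) (by simp [hδc])
  obtain ⟨k, hmem, hsub⟩ := exists_add_zsmul_mem_and_sub_mem δ hnonneg hFano
    (GLgroup.mem_GLplus_or_sub_mem_GLplus d hp) y
  have hlower : GLle n p 0 (y + k • GLomega d n p) := by rwa [GLle, sub_zero]
  exact ⟨y + k • GLomega d n p, ⟨hlower, hsub⟩,
    QuotientAddGroup.mk_add_of_mem y (AddSubgroup.zsmul_mem_zmultiples _ k)⟩
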